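/- Let n ≥ 3, λ > 0, and let ξ ~ N(ν, λ²I_n) be an n-dimensional Gaussian random vector with mean ν = (‖ν‖, 0, 0, …, 0)ᵀ. Then the covariance matrix of ξ/‖ξ‖ is diagonal; its (1,1)-entry equals E[ξ₁²/‖ξ‖²] − (E[ξ₁/‖ξ‖])², all of its remaining diagonal entries are equal to each other, and the (2,2)-entry equals (1/(n−1))·(1 − E[ξ₁²/‖ξ‖²]). -/

import Mathlib

open MeasureTheory ProbabilityTheory Matrix

noncomputable section

def euclNorm {n : ℕ} (x : Fin n → ℝ) : ℝ := Real.sqrt (∑ i, x i ^ 2)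

def centerMat (n : ℕ) : Matrix (Fin n) (Fin n) ℝ :=
  1 - (n : ℝ)⁻¹ • Matrix.of (fun _ _ => (1 : ℝ))

def chi {n : ℕ} (z : Fin n → ℝ) : Fin n → ℝ :=
  (euclNorm ((centerMat n).mulVec z))⁻¹ • (centerMat n).mulVec z

def meanVec {Ω : Type*} [MeasurableSpace Ω] (P : Measure Ω) {n : ℕ}
    (X : Ω → Fin n → ℝ) : Fin n → ℝ := fun i => ∫ ω, X ω i ∂P

def covMatrix {Ω : Type*} [MeasurableSpace Ω] (P : Measure Ω) {n : ℕ}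
    (X : Ω → Fin n → ℝ) : Matrix (Fin n) (Fin n) ℝ :=
  Matrix.of fun i j => ∫ ω, (X ω i - meanVec P X i) * (X ω j - meanVec P X j) ∂P

def MRL {Ω : Type*} [MeasurableSpace Ω] (P : Measure Ω) {n : ℕ}
    (X : Ω → Fin n → ℝ) : ℝ := euclNorm (meanVec P X)

def MD {Ω : Type*} [MeasurableSpace Ω] (P : Measure Ω) {n : ℕ}
    (X : Ω → Fin n → ℝ) : Fin n → ℝ := (euclNorm (meanVec P X))⁻¹ • meanVec P X

def stdGaussianPi (n : ℕ) : Measure (Fin n → ℝ) :=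
  Measure.pi fun _ => gaussianReal 0 1

def IsGaussianVec {Ω : Type*} [MeasurableSpace Ω] (P : Measure Ω) {n : ℕ}
    (Z : Ω → Fin n → ℝ) (m : Fin n → ℝ) (S : Matrix (Fin n) (Fin n) ℝ) : Prop :=
  ∃ A : Matrix (Fin n) (Fin n) ℝ, A * Aᵀ = S ∧
    Measure.map Z P = Measure.map (fun x => m + A.mulVec x) (stdGaussianPi n)

def ascFact (a : ℝ) (k : ℕ) : ℝ := ∏ i ∈ Finset.range k, (a + i)

def kummerM (a b z : ℝ) : ℝ := ∑' k : ℕ, (ascFact a k / ascFact b k) * z ^ k / (Nat.factorial k)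

def varrho (m : ℕ) (x : ℝ) : ℝ :=
  (Real.Gamma (((m : ℝ) + 1) / 2) / (Real.sqrt 2 * Real.Gamma (((m : ℝ) + 2) / 2))) * x *
    kummerM (1 / 2) (((m : ℝ) + 2) / 2) (-x ^ 2 / 2)

def fFun (m : ℕ) (x : ℝ) : ℝ :=
  1 - (((m : ℝ) - 1) / m) * kummerM 1 ((m : ℝ) / 2 + 1) (-x ^ 2 / 2) - (varrho m x) ^ 2

def gFun (m : ℕ) (x : ℝ) : ℝ :=
  (1 / (m : ℝ)) * kummerM 1 ((m : ℝ) / 2 + 1) (-x ^ 2 / 2)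

def Vmat (n : ℕ) : Matrix (Fin n) (Fin n) ℝ :=
  Matrix.of fun i j =>
    if (j : ℕ) = n - 1 then 1 / Real.sqrt n
    else if (i : ℕ) = (j : ℕ) then
      ((n : ℝ) - 1 - (j : ℕ)) / Real.sqrt (((n : ℝ) - 1 - (j : ℕ)) * ((n : ℝ) - (j : ℕ)))
    else if (j : ℕ) < (i : ℕ) then
      -(1 / Real.sqrt (((n : ℝ) - 1 - (j : ℕ)) * ((n : ℝ) - (j : ℕ))))
    else 0

def projMat (n : ℕ) : Matrix (Fin n) (Fin n) ℝ :=
  Matrix.diagonal fun i => if (i : ℕ) < n - 1 then 1 else 0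

def embedZero {n : ℕ} (v : Fin (n - 1) → ℝ) : Fin n → ℝ :=
  fun i => if h : (i : ℕ) < n - 1 then v ⟨i, h⟩ else 0

def Ximat (n : ℕ) (r : ℝ) : Matrix (Fin n) (Fin n) ℝ :=
  Matrix.of fun i j => if i = j then 1 else r

def stdNormCDF (x : ℝ) : ℝ := (gaussianReal 0 1 (Set.Iic x)).toReal

def thetaTilde : Fin 2 → ℝ := ![Real.sqrt 2 / 2, -(Real.sqrt 2 / 2)]

/-!
A Gaussian law is determined by its mean and covariance matrix, so the law of `ξ` is invariant
under every orthogonal matrix fixing `ν`, in particular under changing the sign of, or transposing,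
coordinates other than the first. These maps act on `ξ / ‖ξ‖` in the same way. The sign change of
coordinate `k` makes the `k`-th mean and all covariances in the `k`-th row off the diagonal equal to
their own negatives, and transpositions make the remaining variances equal. Since these variances
are second moments and the squared coordinates of `ξ / ‖ξ‖` sum to `1` almost surely, the
`n - 1` of them add up to `1 - E[ξ₁² / ‖ξ‖²]`.
-/

section Direction

variable {n : ℕ}

lemma euclNorm_comp_perm (x : Fin n → ℝ) (σ : Equiv.Perm (Fin n)) :
    euclNorm (x ∘ σ) = euclNorm x :=
  congrArg Real.sqrt (Equiv.sum_comp σ fun i => x i ^ 2)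

lemma euclNorm_update_neg (x : Fin n → ℝ) (k : Fin n) :
    euclNorm (Function.update x k (-x k)) = euclNorm x := by
  refine congrArg Real.sqrt (Finset.sum_congr rfl fun i _ => ?_)
  rcases eq_or_ne i k with rfl | hik
  · simp
  · simp [hik]

lemma measurable_euclNorm : Measurable (euclNorm : (Fin n → ℝ) → ℝ) := by
  unfold euclNorm
  fun_prop

/-- The direction of a vector, its radial projection onto the Euclidean unit sphere; since
`0⁻¹ = 0`, the direction of the zero vector is zero. -/
def direction (x : Fin n → ℝ) : Fin n → ℝ := (euclNorm x)⁻¹ • x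

lemma direction_apply (x : Fin n → ℝ) (i : Fin n) : direction x i = x i / euclNorm x :=
  inv_mul_eq_div _ _

lemma direction_comp_perm (x : Fin n → ℝ) (σ : Equiv.Perm (Fin n)) :
    direction (x ∘ σ) = direction x ∘ σ := by
  ext i
  simp only [direction_apply, euclNorm_comp_perm, Function.comp_apply]

lemma direction_update_neg (x : Fin n → ℝ) (k : Fin n) :
    direction (Function.update x k (-x k)) =
      Function.update (direction x) k (-direction x k) := by
  rw [direction, euclNorm_update_neg, ← Function.update_smul, smul_neg]
  rfl

lemma measurable_direction : Measurable (direction : (Fin n → ℝ) → Fin n → ℝ) :=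
  measurable_euclNorm.inv.smul measurable_id

lemma measurable_direction_apply (i : Fin n) : Measurable fun x => direction x i :=
  (measurable_pi_apply i).comp measurable_direction

lemma norm_direction_apply_le_one (x : Fin n → ℝ) (i : Fin n) : ‖direction x i‖ ≤ 1 := by
  have hle : |x i| ≤ euclNorm x :=
    Real.abs_le_sqrt (Finset.single_le_sum (fun j _ => sq_nonneg (x j)) (Finset.mem_univ i))
  have hnonneg : 0 ≤ euclNorm x := Real.sqrt_nonneg _
  rw [direction_apply, Real.norm_eq_abs, abs_div, abs_of_nonneg hnonneg]
  exact div_le_one_of_le₀ hle hnonneg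

lemma sum_sq_direction {x : Fin n → ℝ} (hx : x ≠ 0) : ∑ i, direction x i ^ 2 = 1 := by
  obtain ⟨i, hi⟩ := Function.ne_iff.mp hx
  have hpos : 0 < ∑ j, x j ^ 2 :=
    Finset.sum_pos' (fun j _ => sq_nonneg _) ⟨i, Finset.mem_univ i, sq_pos_of_ne_zero hi⟩
  simp only [direction_apply, div_pow, ← Finset.sum_div, euclNorm, Real.sq_sqrt hpos.le]
  exact div_self hpos.ne'

lemma memLp_direction_apply (μ : Measure (Fin n → ℝ)) [IsFiniteMeasure μ] (p : ENNReal)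
    (i : Fin n) : MemLp (fun x => direction x i) p μ :=
  .of_bound (measurable_direction_apply i).aestronglyMeasurable 1
    (ae_of_all _ fun x => norm_direction_apply_le_one x i)

lemma sum_integral_sq_direction {μ : Measure (Fin n → ℝ)} [IsProbabilityMeasure μ]
    (hμ0 : ∀ᵐ x ∂μ, x ≠ 0) : ∑ i, ∫ x, direction x i ^ 2 ∂μ = 1 := by
  rw [← integral_finsetSum _ fun i _ => (memLp_direction_apply μ 2 i).integrable_sq,
    integral_congr_ae (hμ0.mono fun x hx => sum_sq_direction hx)]
  simp

end Direction

section MeasurePreserving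

variable {α : Type*} [MeasurableSpace α] {μ : Measure α} {f : α → α} {X Y : α → ℝ}

lemma integral_eq_zero_of_odd (hf : MeasurePreserving f μ μ) (hX : AEStronglyMeasurable X μ)
    (hodd : ∀ x, X (f x) = -X x) : ∫ x, X x ∂μ = 0 := by
  have hneg : ∫ x, X x ∂μ = -∫ x, X x ∂μ :=
    calc ∫ x, X x ∂μ = ∫ x, X x ∂(μ.map f) := by rw [hf.map_eq]
      _ = ∫ x, X (f x) ∂μ := integral_map hf.aemeasurable (by rwa [hf.map_eq])
      _ = -∫ x, X x ∂μ := by simp only [hodd, integral_neg]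
  exact self_eq_neg.mp hneg

lemma covariance_comp_measurePreserving (hf : MeasurePreserving f μ μ)
    (hX : AEStronglyMeasurable X μ) (hY : AEStronglyMeasurable Y μ) :
    cov[X ∘ f, Y ∘ f; μ] = cov[X, Y; μ] := by
  rw [← covariance_map (by rwa [hf.map_eq]) (by rwa [hf.map_eq]) hf.aemeasurable, hf.map_eq]

lemma covariance_eq_zero_of_odd_of_even (hf : MeasurePreserving f μ μ)
    (hX : AEStronglyMeasurable X μ) (hY : AEStronglyMeasurable Y μ)
    (hodd : X ∘ f = -X) (heven : Y ∘ f = Y) : cov[X, Y; μ] = 0 := by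
  have hneg := covariance_comp_measurePreserving hf hX hY
  rw [hodd, heven, covariance_neg_left] at hneg
  exact neg_eq_self.mp hneg

end MeasurePreserving

section CovMatrix

variable {Ω : Type*} [MeasurableSpace Ω] {P : Measure Ω} {n : ℕ}

lemma covMatrix_apply (P : Measure Ω) (X : Ω → Fin n → ℝ) (i j : Fin n) :
    covMatrix P X i j = cov[fun ω => X ω i, fun ω => X ω j; P] := rfl

lemma covMatrix_map {α : Type*} [MeasurableSpace α] {X : Ω → α} {f : α → Fin n → ℝ}
    (hf : Measurable f) (hX : AEMeasurable X P) :
    covMatrix (P.map X) f = covMatrix P fun ω => f (X ω) := by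
  ext i j
  have hfi (k : Fin n) : AEStronglyMeasurable (fun x => f x k) (P.map X) :=
    ((measurable_pi_apply k).comp hf).aestronglyMeasurable
  exact covariance_map (hfi i) (hfi j) hX

lemma covMatrix_direction_self (μ : Measure (Fin n → ℝ)) [IsProbabilityMeasure μ] (i : Fin n) :
    covMatrix μ direction i i = ∫ x, direction x i ^ 2 ∂μ - (∫ x, direction x i ∂μ) ^ 2 := by
  rw [covMatrix_apply, covariance_self (measurable_direction_apply i).aemeasurable,
    variance_eq_sub (memLp_direction_apply μ 2 i)]
  rfl

end CovMatrix

/-- Invariance of a measure on `ℝⁿ` under the signed permutations of the coordinates other than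
`a`, expressed through the generators of this group: the sign changes of one coordinate and the
transpositions. It is what the argument uses of the invariance under all orthogonal maps that fix
the axis `ℝ eₐ`. -/
structure IsSignedPermInvariantOff {n : ℕ} (a : Fin n) (μ : Measure (Fin n → ℝ)) : Prop where
  update_neg : ∀ k ≠ a, MeasurePreserving (fun x => Function.update x k (-x k)) μ μ
  comp_swap : ∀ k ≠ a, ∀ l ≠ a, MeasurePreserving (fun x => x ∘ Equiv.swap k l) μ μ

namespace IsSignedPermInvariantOff

variable {n : ℕ} {a : Fin n} {μ : Measure (Fin n → ℝ)}

lemma integral_direction_apply_eq_zero (hμ : IsSignedPermInvariantOff a μ) {k : Fin n}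
    (hk : k ≠ a) : ∫ x, direction x k ∂μ = 0 :=
  integral_eq_zero_of_odd (hμ.update_neg k hk) (measurable_direction_apply k).aestronglyMeasurable
    fun x => by rw [direction_update_neg, Function.update_self]

lemma covMatrix_direction_of_ne (hμ : IsSignedPermInvariantOff a μ) {k l : Fin n} (hk : k ≠ a)
    (hkl : k ≠ l) : covMatrix μ direction k l = 0 :=
  covariance_eq_zero_of_odd_of_even (hμ.update_neg k hk)
    (measurable_direction_apply k).aestronglyMeasurable
    (measurable_direction_apply l).aestronglyMeasurable
    (by ext x; simp [direction_update_neg]) (by ext x; simp [direction_update_neg, hkl.symm])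

lemma isDiag_covMatrix_direction (hμ : IsSignedPermInvariantOff a μ) :
    (covMatrix μ direction).IsDiag := by
  intro i j hij
  by_cases hi : i = a
  · rw [covMatrix_apply, covariance_comm]
    exact hμ.covMatrix_direction_of_ne (fun hj => hij (hi.trans hj.symm)) hij.symm
  · exact hμ.covMatrix_direction_of_ne hi hij

lemma covMatrix_direction_self_eq (hμ : IsSignedPermInvariantOff a μ) {k l : Fin n}
    (hk : k ≠ a) (hl : l ≠ a) : covMatrix μ direction k k = covMatrix μ direction l l := by
  have hswap : (fun x => direction x l) ∘ (fun x => x ∘ Equiv.swap k l) =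
      fun x => direction x k := by
    ext x
    simp [direction_comp_perm]
  have hmeas := (measurable_direction_apply l).aestronglyMeasurable (μ := μ)
  rw [covMatrix_apply, ← hswap, covariance_comp_measurePreserving (hμ.comp_swap k hk l hl) hmeas
    hmeas, covMatrix_apply]

lemma covMatrix_direction_self_of_ne (hμ : IsSignedPermInvariantOff a μ) {k : Fin n}
    (hk : k ≠ a) : covMatrix μ direction k k = ∫ x, direction x k ^ 2 ∂μ := by
  rw [covMatrix_apply, covariance_self (measurable_direction_apply k).aemeasurable,
    variance_of_integral_eq_zero (measurable_direction_apply k).aemeasurable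
      (hμ.integral_direction_apply_eq_zero hk)]

lemma covMatrix_direction_self_eq_div [IsProbabilityMeasure μ]
    (hμ : IsSignedPermInvariantOff a μ) (hμ0 : ∀ᵐ x ∂μ, x ≠ 0) {k : Fin n} (hk : k ≠ a) :
    covMatrix μ direction k k = 1 / ((n : ℝ) - 1) * (1 - ∫ x, direction x a ^ 2 ∂μ) := by
  have hcard : ((Finset.univ.erase a).card : ℝ) = n - 1 := by
    rw [Finset.cast_card_erase_of_mem (Finset.mem_univ a), Finset.card_fin]
  have hpos : (0 : ℝ) < n - 1 := by
    rw [← hcard]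
    exact_mod_cast Finset.card_pos.mpr ⟨k, Finset.mem_erase.mpr ⟨hk, Finset.mem_univ k⟩⟩
  have hoff : ∑ i ∈ Finset.univ.erase a, ∫ x, direction x i ^ 2 ∂μ =
      ((n : ℝ) - 1) * covMatrix μ direction k k := by
    rw [← hcard, ← nsmul_eq_mul]
    refine Finset.sum_eq_card_nsmul fun i hi => ?_
    rw [← hμ.covMatrix_direction_self_of_ne (Finset.ne_of_mem_erase hi),
      hμ.covMatrix_direction_self_eq (Finset.ne_of_mem_erase hi) hk]
  have hsum := sum_integral_sq_direction hμ0
  rw [← Finset.add_sum_erase _ _ (Finset.mem_univ a), hoff] at hsum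
  rw [one_div_mul_eq_div, eq_div_iff hpos.ne']
  linarith

end IsSignedPermInvariantOff

section SignedPermutationMatrix

variable {n : ℕ}

lemma diagonal_update_one_neg_one_mulVec (k : Fin n) (x : Fin n → ℝ) :
    diagonal (Function.update 1 k (-1)) *ᵥ x = Function.update x k (-x k) := by
  ext i
  rcases eq_or_ne i k with rfl | hik
  · simp [mulVec_diagonal]
  · simp [mulVec_diagonal, hik]

lemma diagonal_update_one_neg_one_mem_orthogonalGroup (k : Fin n) :
    diagonal (Function.update 1 k (-1)) ∈ orthogonalGroup (Fin n) ℝ := by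
  rw [mem_orthogonalGroup_iff, diagonal_transpose, diagonal_mul_diagonal, ← diagonal_one]
  congr 1
  ext i
  rcases eq_or_ne i k with rfl | hik
  · simp
  · simp [hik]

lemma permMatrix_mem_orthogonalGroup (σ : Equiv.Perm (Fin n)) :
    σ.permMatrix ℝ ∈ orthogonalGroup (Fin n) ℝ := by
  rw [mem_orthogonalGroup_iff, transpose_permMatrix, ← permMatrix_mul, inv_mul_cancel,
    permMatrix_one]

end SignedPermutationMatrix

section GaussianVec

lemma isProbabilityMeasure_stdGaussianPi (n : ℕ) : IsProbabilityMeasure (stdGaussianPi n) := by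
  unfold stdGaussianPi
  infer_instance

variable {n : ℕ}

lemma measurable_const_add_mulVec {m : ℕ} (c : Fin n → ℝ) (A : Matrix (Fin n) (Fin m) ℝ) :
    Measurable fun x : Fin m → ℝ => c + A *ᵥ x :=
  Continuous.measurable (by fun_prop)

lemma charFun_map_mulVec_stdGaussianPi {m : ℕ} (A : Matrix (Fin n) (Fin m) ℝ)
    (t : EuclideanSpace ℝ (Fin n)) :
    charFun ((stdGaussianPi m).map fun x => WithLp.toLp 2 (A *ᵥ x)) t =
      Complex.exp (-(t.ofLp ⬝ᵥ (A * Aᵀ) *ᵥ t.ofLp : ℝ) / 2) := by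
  have hinner (x : Fin m → ℝ) :
      inner ℝ (WithLp.toLp 2 (A *ᵥ x)) t =
        inner ℝ (WithLp.toLp 2 x) (WithLp.toLp 2 (Aᵀ *ᵥ t.ofLp)) := by
    simp only [EuclideanSpace.inner_eq_star_dotProduct, star_trivial, dotProduct_mulVec,
      mulVec_transpose]
  have hnorm : ‖WithLp.toLp 2 (Aᵀ *ᵥ t.ofLp)‖ ^ 2 = t.ofLp ⬝ᵥ (A * Aᵀ) *ᵥ t.ofLp := by
    rw [← real_inner_self_eq_norm_sq, EuclideanSpace.inner_toLp_toLp, star_trivial,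
      ← mulVec_mulVec, dotProduct_mulVec t.ofLp A, mulVec_transpose]
  calc charFun ((stdGaussianPi m).map fun x => WithLp.toLp 2 (A *ᵥ x)) t
      = charFun ((stdGaussianPi m).map (WithLp.toLp 2)) (WithLp.toLp 2 (Aᵀ *ᵥ t.ofLp)) := by
        rw [charFun_apply, charFun_apply, integral_map (by fun_prop) (by fun_prop),
          integral_map (by fun_prop) (by fun_prop)]
        simp only [hinner]
    _ = Complex.exp (-(t.ofLp ⬝ᵥ (A * Aᵀ) *ᵥ t.ofLp : ℝ) / 2) := by
        rw [stdGaussianPi, map_pi_eq_stdGaussian, charFun_stdGaussian, ← hnorm, Complex.ofReal_pow]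

lemma map_mulVec_stdGaussianPi_congr {m k : ℕ} {A : Matrix (Fin n) (Fin m) ℝ}
    {B : Matrix (Fin n) (Fin k) ℝ} (hAB : A * Aᵀ = B * Bᵀ) :
    (stdGaussianPi m).map (A *ᵥ ·) = (stdGaussianPi k).map (B *ᵥ ·) := by
  have := isProbabilityMeasure_stdGaussianPi
  apply (MeasurableEquiv.toLp 2 (Fin n → ℝ)).map_measurableEquiv_injective
  rw [Measure.map_map (by fun_prop) (by fun_prop), Measure.map_map (by fun_prop) (by fun_prop)]
  refine Measure.ext_of_charFun (funext fun t => ?_)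
  exact (charFun_map_mulVec_stdGaussianPi A t).trans
    (hAB ▸ (charFun_map_mulVec_stdGaussianPi B t).symm)

namespace IsGaussianVec

variable {Ω : Type*} [MeasurableSpace Ω] {P : Measure Ω} {Z : Ω → Fin n → ℝ} {m : Fin n → ℝ}
  {S : Matrix (Fin n) (Fin n) ℝ}

lemma aemeasurable (hZ : IsGaussianVec P Z m S) : AEMeasurable Z P := by
  obtain ⟨A, -, hmap⟩ := hZ
  have := isProbabilityMeasure_stdGaussianPi n
  have := Measure.isProbabilityMeasure_map (measurable_const_add_mulVec m A).aemeasurable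
    (μ := stdGaussianPi n)
  exact AEMeasurable.of_map_ne_zero (hmap ▸ IsProbabilityMeasure.ne_zero _)

lemma map_eq {Ω' : Type*} [MeasurableSpace Ω'] {P' : Measure Ω'} {Z' : Ω' → Fin n → ℝ}
    (hZ : IsGaussianVec P Z m S) (hZ' : IsGaussianVec P' Z' m S) : P.map Z = P'.map Z' := by
  obtain ⟨A, hA, hmapA⟩ := hZ
  obtain ⟨B, hB, hmapB⟩ := hZ'
  have hsplit (C : Matrix (Fin n) (Fin n) ℝ) : (stdGaussianPi n).map (fun x => m + C *ᵥ x) =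
      ((stdGaussianPi n).map (C *ᵥ ·)).map (m + ·) :=
    (Measure.map_map (measurable_const_add m) (by fun_prop)).symm
  rw [hmapA, hmapB, hsplit, hsplit, map_mulVec_stdGaussianPi_congr (hA.trans hB.symm)]

lemma mulVec (hZ : IsGaussianVec P Z m S) (R : Matrix (Fin n) (Fin n) ℝ) :
    IsGaussianVec P (fun ω => R *ᵥ Z ω) (R *ᵥ m) (R * S * Rᵀ) := by
  have hZmeas := hZ.aemeasurable
  obtain ⟨A, rfl, hmap⟩ := hZ
  have hR : Measurable fun x : Fin n → ℝ => R *ᵥ x := by fun_prop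
  refine ⟨R * A, by simp only [transpose_mul, Matrix.mul_assoc], ?_⟩
  calc P.map (fun ω => R *ᵥ Z ω)
      = (P.map Z).map (R *ᵥ ·) := (AEMeasurable.map_map_of_aemeasurable hR.aemeasurable hZmeas).symm
    _ = (stdGaussianPi n).map (fun x => R *ᵥ (m + A *ᵥ x)) := by
        rw [hmap, Measure.map_map hR (measurable_const_add_mulVec m A)]
        rfl
    _ = (stdGaussianPi n).map (fun x => R *ᵥ m + (R * A) *ᵥ x) := by
        simp only [mulVec_add, mulVec_mulVec]

lemma measurePreserving_mulVec (hZ : IsGaussianVec P Z m S) {R : Matrix (Fin n) (Fin n) ℝ}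
    (hm : R *ᵥ m = m) (hS : R * S * Rᵀ = S) :
    MeasurePreserving (R *ᵥ ·) (P.map Z) (P.map Z) := by
  have hR : Measurable fun x : Fin n → ℝ => R *ᵥ x := by fun_prop
  refine ⟨hR, ?_⟩
  rw [AEMeasurable.map_map_of_aemeasurable hR.aemeasurable hZ.aemeasurable]
  have hRZ := hZ.mulVec R
  rw [hm, hS] at hRZ
  exact hRZ.map_eq hZ

lemma nullSingletonClass_map [NeZero n] (hZ : IsGaussianVec P Z m S) (hS : IsUnit S) :
    NullSingletonClass (P.map Z) := by
  obtain ⟨A, rfl, hmap⟩ := hZ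
  have hinj : Function.Injective fun x => m + A *ᵥ x :=
    (add_right_injective m).comp (mulVec_injective_of_isUnit (isUnit_of_mul_isUnit_left hS))
  have := nullSingletonClass_gaussianReal (μ := 0) one_ne_zero
  refine ⟨fun y => ?_⟩
  rw [hmap, Measure.map_apply (measurable_const_add_mulVec m A) (measurableSet_singleton y),
    stdGaussianPi]
  exact (Set.subsingleton_singleton.preimage hinj).measure_zero _

lemma ae_ne [NeZero n] (hZ : IsGaussianVec P Z m S) (hS : IsUnit S) (y : Fin n → ℝ) :
    ∀ᵐ ω ∂P, Z ω ≠ y := by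
  have := hZ.nullSingletonClass_map hS
  exact ae_of_ae_map hZ.aemeasurable (Measure.ae_ne (P.map Z) y)

lemma measurePreserving_mulVec_of_mem_orthogonalGroup {c : ℝ}
    (hZ : IsGaussianVec P Z m (c • (1 : Matrix (Fin n) (Fin n) ℝ)))
    {R : Matrix (Fin n) (Fin n) ℝ} (hR : R ∈ orthogonalGroup (Fin n) ℝ) (hm : R *ᵥ m = m) :
    MeasurePreserving (R *ᵥ ·) (P.map Z) (P.map Z) := by
  refine hZ.measurePreserving_mulVec hm ?_
  rw [Matrix.mul_smul, Matrix.smul_mul, Matrix.mul_one]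
  exact congrArg (c • ·) ((mem_orthogonalGroup_iff (Fin n) ℝ).mp hR)

lemma isSignedPermInvariantOff {c : ℝ} {a : Fin n}
    (hZ : IsGaussianVec P Z m (c • (1 : Matrix (Fin n) (Fin n) ℝ))) (hm : ∀ i ≠ a, m i = 0) :
    IsSignedPermInvariantOff a (P.map Z) where
  update_neg k hk := by
    simp only [← diagonal_update_one_neg_one_mulVec]
    refine hZ.measurePreserving_mulVec_of_mem_orthogonalGroup
      (diagonal_update_one_neg_one_mem_orthogonalGroup k) ?_
    rw [diagonal_update_one_neg_one_mulVec, hm k hk, neg_zero, ← hm k hk, Function.update_eq_self]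
  comp_swap k hk l hl := by
    simp only [← permMatrix_mulVec]
    refine hZ.measurePreserving_mulVec_of_mem_orthogonalGroup
      (permMatrix_mem_orthogonalGroup (Equiv.swap k l)) ?_
    have hkl : m k = m l := (hm k hk).trans (hm l hl).symm
    rw [permMatrix_mulVec, Equiv.comp_swap_eq_update, hkl, Function.update_eq_self, ← hkl,
      Function.update_eq_self]

end IsGaussianVec

end GaussianVec

theorem stmt14_general {Ω : Type*} [MeasurableSpace Ω] {P : Measure Ω} [IsProbabilityMeasure P]
    {n : ℕ} {a : Fin n} {X : Ω → Fin n → ℝ} (hX : AEMeasurable X P)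
    (hsymm : IsSignedPermInvariantOff a (P.map X)) (hX0 : ∀ᵐ ω ∂P, X ω ≠ 0) :
    (covMatrix P (fun ω => (euclNorm (X ω))⁻¹ • X ω)).IsDiag ∧
    covMatrix P (fun ω => (euclNorm (X ω))⁻¹ • X ω) a a =
      (∫ ω, X ω a ^ 2 / euclNorm (X ω) ^ 2 ∂P) - (∫ ω, X ω a / euclNorm (X ω) ∂P) ^ 2 ∧
    ∀ i ≠ a, covMatrix P (fun ω => (euclNorm (X ω))⁻¹ • X ω) i i =
      1 / ((n : ℝ) - 1) * (1 - ∫ ω, X ω a ^ 2 / euclNorm (X ω) ^ 2 ∂P) := by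
  have := Measure.isProbabilityMeasure_map hX
  have hcov : covMatrix P (fun ω => (euclNorm (X ω))⁻¹ • X ω) = covMatrix (P.map X) direction :=
    (covMatrix_map measurable_direction hX).symm
  have hmean : ∫ ω, X ω a / euclNorm (X ω) ∂P = ∫ x, direction x a ∂(P.map X) := by
    rw [integral_map hX (measurable_direction_apply a).aestronglyMeasurable]
    simp only [direction_apply]
  have hsq : ∫ ω, X ω a ^ 2 / euclNorm (X ω) ^ 2 ∂P = ∫ x, direction x a ^ 2 ∂(P.map X) := by
    rw [integral_map hX ((measurable_direction_apply a).pow_const 2).aestronglyMeasurable]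
    simp only [direction_apply, div_pow]
  have hmap0 : ∀ᵐ x ∂(P.map X), x ≠ 0 :=
    (ae_map_iff hX (measurableSet_singleton 0).compl).mpr hX0
  rw [hcov, hmean, hsq]
  exact ⟨hsymm.isDiag_covMatrix_direction, covMatrix_direction_self (P.map X) a,
    fun i hi => hsymm.covMatrix_direction_self_eq_div hmap0 hi⟩

/-- structure of the covariance matrix of the projected
homoscedastic normal. -/
theorem stmt14 {Ω : Type*} [MeasurableSpace Ω] (P : Measure Ω) [IsProbabilityMeasure P]
    {n : ℕ} (hn : 3 ≤ n) (lam : ℝ) (hlam : 0 < lam) (ν : Fin n → ℝ)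
    (hν : ν = fun i => if i = ⟨0, by omega⟩ then euclNorm ν else 0)
    (ξ : Ω → Fin n → ℝ)
    (hgauss : IsGaussianVec P ξ ν (lam ^ 2 • (1 : Matrix (Fin n) (Fin n) ℝ))) :
    (covMatrix P (fun ω => (euclNorm (ξ ω))⁻¹ • ξ ω)).IsDiag ∧
    covMatrix P (fun ω => (euclNorm (ξ ω))⁻¹ • ξ ω) ⟨0, by omega⟩ ⟨0, by omega⟩ =
      (∫ ω, (ξ ω ⟨0, by omega⟩) ^ 2 / (euclNorm (ξ ω)) ^ 2 ∂P) -
        (∫ ω, ξ ω ⟨0, by omega⟩ / euclNorm (ξ ω) ∂P) ^ 2 ∧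
    (∀ i j : Fin n, i ≠ ⟨0, by omega⟩ → j ≠ ⟨0, by omega⟩ →
      covMatrix P (fun ω => (euclNorm (ξ ω))⁻¹ • ξ ω) i i =
      covMatrix P (fun ω => (euclNorm (ξ ω))⁻¹ • ξ ω) j j) ∧
    covMatrix P (fun ω => (euclNorm (ξ ω))⁻¹ • ξ ω) ⟨1, by omega⟩ ⟨1, by omega⟩ =
      (1 / ((n : ℝ) - 1)) *
        (1 - ∫ ω, (ξ ω ⟨0, by omega⟩) ^ 2 / (euclNorm (ξ ω)) ^ 2 ∂P) := by
  have : NeZero n := ⟨by omega⟩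
  have hS : IsUnit (lam ^ 2 • (1 : Matrix (Fin n) (Fin n) ℝ)) :=
    isUnit_one.smul (Units.mk0 (lam ^ 2) (by positivity))
  obtain ⟨hdiag, haxis, hoff⟩ := stmt14_general hgauss.aemeasurable
    (hgauss.isSignedPermInvariantOff fun i hi => (congrFun hν i).trans (if_neg hi))
    (hgauss.ae_ne hS 0)
  exact ⟨hdiag, haxis, fun i j hi hj => (hoff i hi).trans (hoff j hj).symm, hoff _ (by simp)⟩
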